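/- Fix α ∈ (0,1), a bounded interval O ⊆ ℝ, and a strictly increasing function g : O → ℝ. Let Y and Ŷ be real random variables whose distributions are supported in O, whose cumulative distribution functions F and F̂ are continuous, and for which g(Y) and g(Ŷ) are integrable. If the expected difference of loss differences vanishes for all forecast pairs, i.e. E[d_{g,α}(Y, x₁, x₂)] = E[d_{g,α}(Ŷ, x₁, x₂)] for all x₁, x₂ ∈ O, then Y and Ŷ are equal in distribution: F(z) = F̂(z) for all z ∈ ℝ. Hence quantile forecasts cannot be evaluated robustly unless the proxy has the same distribution as the true target. -/

import Mathlib

/-!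
For `x₁ < x₂` in `O` and `y ∈ O`, monotonicity of `g` sandwiches the loss difference pointwise:
`(1{y ≤ x₁} - α) (g x₂ - g x₁) ≤ L(y, x₂) - L(y, x₁) ≤ (1{y ≤ x₂} - α) (g x₂ - g x₁)`.
Taking expectations (`loss_diff_bounds`), the common value of the expected loss difference lies
above `(F x₁ - α) (g x₂ - g x₁)` and below `(F̂ x₂ - α) (g x₂ - g x₁)`, so `F x₁ ≤ F̂ x₂`
for all `x₁ < x₂` in `O`. Letting `x₂ ↓ x₁` gives `F ≤ F̂` at every point of `O` but its maximum
(`cdf_le_of_expected_loss_eq`); at the remaining real numbers both distribution functions are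
`0` or both are `1`. The reverse inequality follows by symmetry.
-/

open MeasureTheory ProbabilityTheory

lemma cdf_map_eq_integral {Ω : Type*} {mΩ : MeasurableSpace Ω} (μ : Measure Ω)
    [IsProbabilityMeasure μ] (Y : Ω → ℝ) (hY : Measurable Y) (x : ℝ) :
    cdf (μ.map Y) x = ∫ ω, (if Y ω ≤ x then (1 : ℝ) else 0) ∂μ := by
  have : IsProbabilityMeasure (μ.map Y) := Measure.isProbabilityMeasure_map hY.aemeasurable
  have hm : MeasurableSet (Y ⁻¹' Set.Iic x) := hY measurableSet_Iic
  rw [cdf_eq_real, map_measureReal_apply hY measurableSet_Iic, ← integral_indicator_one hm]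
  rfl

lemma integrable_indicator_le {Ω : Type*} {mΩ : MeasurableSpace Ω} (μ : Measure Ω)
    [IsProbabilityMeasure μ] (Y : Ω → ℝ) (hY : Measurable Y) (x : ℝ) :
    Integrable (fun ω => (if Y ω ≤ x then (1 : ℝ) else 0)) μ :=
  (integrable_const (1 : ℝ)).indicator (hY measurableSet_Iic : MeasurableSet (Y ⁻¹' Set.Iic x))

lemma integrable_loss {Ω : Type*} {mΩ : MeasurableSpace Ω} (μ : Measure Ω)
    [IsProbabilityMeasure μ] (α : ℝ) (g : ℝ → ℝ) (Y : Ω → ℝ) (hY : Measurable Y)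
    (hint : Integrable (fun ω => g (Y ω)) μ) (x : ℝ) :
    Integrable (fun ω => ((if Y ω ≤ x then (1 : ℝ) else 0) - α) * (g x - g (Y ω))) μ := by
  refine Integrable.bdd_mul (c := 1 + |α|) ((integrable_const _).sub hint)
    ((integrable_indicator_le μ Y hY x).sub (integrable_const α)).aestronglyMeasurable
    (Filter.Eventually.of_forall fun ω => ?_)
  refine (norm_sub_le _ _).trans ?_
  rw [Real.norm_eq_abs α]
  gcongr
  split_ifs <;> simp

/-- The expected loss difference of `x₁ < x₂` is sandwiched between the values of the
distribution function at the two forecasts. -/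
lemma loss_diff_bounds {Ω : Type*} {mΩ : MeasurableSpace Ω} (μ : Measure Ω)
    [IsProbabilityMeasure μ] (α : ℝ) (O : Set ℝ) (g : ℝ → ℝ) (hg : StrictMonoOn g O)
    (Y : Ω → ℝ) (hY : Measurable Y) (hsupp : ∀ᵐ ω ∂μ, Y ω ∈ O)
    (hint : Integrable (fun ω => g (Y ω)) μ)
    {x₁ x₂ : ℝ} (h₁ : x₁ ∈ O) (h₂ : x₂ ∈ O) (hlt : x₁ < x₂) :
    (cdf (μ.map Y) x₁ - α) * (g x₂ - g x₁) ≤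
        ∫ ω, (((if Y ω ≤ x₂ then (1 : ℝ) else 0) - α) * (g x₂ - g (Y ω))
          - ((if Y ω ≤ x₁ then (1 : ℝ) else 0) - α) * (g x₁ - g (Y ω))) ∂μ ∧
      ∫ ω, (((if Y ω ≤ x₂ then (1 : ℝ) else 0) - α) * (g x₂ - g (Y ω))
          - ((if Y ω ≤ x₁ then (1 : ℝ) else 0) - α) * (g x₁ - g (Y ω))) ∂μ
        ≤ (cdf (μ.map Y) x₂ - α) * (g x₂ - g x₁) := by
  have hD := (integrable_loss μ α g Y hY hint x₂).sub (integrable_loss μ α g Y hY hint x₁)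
  have hI (x : ℝ) : Integrable
      (fun ω => ((if Y ω ≤ x then (1 : ℝ) else 0) - α) * (g x₂ - g x₁)) μ :=
    ((integrable_indicator_le μ Y hY x).sub (integrable_const α)).mul_const _
  have hE (x : ℝ) : (cdf (μ.map Y) x - α) * (g x₂ - g x₁) =
      ∫ ω, ((if Y ω ≤ x then (1 : ℝ) else 0) - α) * (g x₂ - g x₁) ∂μ := by
    rw [integral_mul_const, integral_sub (integrable_indicator_le μ Y hY x) (integrable_const α),
      cdf_map_eq_integral μ Y hY]
    simp
  rw [hE, hE]
  constructor
  · refine integral_mono_ae (hI x₁) hD ?_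
    filter_upwards [hsupp] with ω hω
    by_cases h2 : Y ω ≤ x₂
    · have := hg.monotoneOn hω h₂ h2
      split_ifs <;> linarith
    · have h1 : ¬ Y ω ≤ x₁ := fun h => h2 (h.trans hlt.le)
      simp only [h1, h2, if_false]
      linarith
  · refine integral_mono_ae hD (hI x₂) ?_
    filter_upwards [hsupp] with ω hω
    by_cases h1 : Y ω ≤ x₁
    · have h2 : Y ω ≤ x₂ := h1.trans hlt.le
      simp only [h1, h2, if_true]
      linarith
    · have := hg.monotoneOn h₁ hω (not_le.mp h1).le
      split_ifs <;> linarith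

/-- One half of the theorem: at any point of `O` lying below another point of `O`, equality of
the expected loss differences forces `F ≤ F̂`. -/
lemma cdf_le_of_expected_loss_eq {Ω : Type*} {mΩ : MeasurableSpace Ω} (μ : Measure Ω)
    [IsProbabilityMeasure μ] (α : ℝ) (O : Set ℝ) (hO_conv : Convex ℝ O)
    (g : ℝ → ℝ) (hg : StrictMonoOn g O)
    (Y Yhat : Ω → ℝ) (hY_meas : Measurable Y) (hYhat_meas : Measurable Yhat)
    (hY_supp : ∀ᵐ ω ∂μ, Y ω ∈ O) (hYhat_supp : ∀ᵐ ω ∂μ, Yhat ω ∈ O)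
    (hFhat_cont : Continuous fun z => cdf (μ.map Yhat) z)
    (hgY_int : Integrable (fun ω => g (Y ω)) μ)
    (hgYhat_int : Integrable (fun ω => g (Yhat ω)) μ)
    (hrobust : ∀ x₁ ∈ O, ∀ x₂ ∈ O,
      ∫ ω, (((if Y ω ≤ x₁ then (1 : ℝ) else 0) - α) * (g x₁ - g (Y ω))
          - ((if Y ω ≤ x₂ then (1 : ℝ) else 0) - α) * (g x₂ - g (Y ω))) ∂μ
        = ∫ ω, (((if Yhat ω ≤ x₁ then (1 : ℝ) else 0) - α) * (g x₁ - g (Yhat ω))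
            - ((if Yhat ω ≤ x₂ then (1 : ℝ) else 0) - α) * (g x₂ - g (Yhat ω))) ∂μ)
    {z b : ℝ} (hz : z ∈ O) (hb : b ∈ O) (hzb : z < b) :
    cdf (μ.map Y) z ≤ cdf (μ.map Yhat) z := by
  have key : ∀ x ∈ Set.Ioo z b, cdf (μ.map Y) z ≤ cdf (μ.map Yhat) x := by
    intro x hx
    have hxO : x ∈ O := hO_conv.ordConnected.out hz hb ⟨hx.1.le, hx.2.le⟩
    have hA := (loss_diff_bounds μ α O g hg Y hY_meas hY_supp hgY_int hz hxO hx.1).1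
    have hB := (loss_diff_bounds μ α O g hg Yhat hYhat_meas hYhat_supp hgYhat_int hz hxO hx.1).2
    rw [hrobust x hxO z hz] at hA
    have hpos : 0 < g x - g z := sub_pos.mpr (hg hz hxO hx.1)
    linarith [le_of_mul_le_mul_right (hA.trans hB) hpos]
  refine ge_of_tendsto (x := nhdsWithin z (Set.Ioi z))
    ((hFhat_cont.tendsto z).mono_left nhdsWithin_le_nhds) ?_
  filter_upwards [Ioo_mem_nhdsGT hzb] with x hx using key x hx

/-- **Quantile forecasts cannot be evaluated robustly under measurement error.**
Let `O` be a bounded interval, `g` strictly increasing on `O`, and let `Y, Yhat` be random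
variables supported in `O` with continuous CDFs and integrable `g`-moments. If the expected
quantile-loss differences at level `α ∈ (0,1)` coincide for the target and the proxy for *all*
forecast pairs `x₁, x₂ ∈ O`, then `Y` and `Yhat` are equal in distribution. -/
theorem quantile_loss_robust_iff_equal_in_distribution
    {Ω : Type*} {mΩ : MeasurableSpace Ω} (μ : Measure Ω) [IsProbabilityMeasure μ]
    (α : ℝ) (hα : α ∈ Set.Ioo (0 : ℝ) 1)
    (O : Set ℝ) (hO_bdd : Bornology.IsBounded O) (hO_conv : Convex ℝ O)
    (g : ℝ → ℝ) (hg : StrictMonoOn g O)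
    (Y Yhat : Ω → ℝ) (hY_meas : Measurable Y) (hYhat_meas : Measurable Yhat)
    (hY_supp : ∀ᵐ ω ∂μ, Y ω ∈ O) (hYhat_supp : ∀ᵐ ω ∂μ, Yhat ω ∈ O)
    (hF_cont : Continuous fun z => cdf (μ.map Y) z)
    (hFhat_cont : Continuous fun z => cdf (μ.map Yhat) z)
    (hgY_int : Integrable (fun ω => g (Y ω)) μ)
    (hgYhat_int : Integrable (fun ω => g (Yhat ω)) μ)
    (hrobust : ∀ x₁ ∈ O, ∀ x₂ ∈ O,
      ∫ ω, (((if Y ω ≤ x₁ then (1 : ℝ) else 0) - α) * (g x₁ - g (Y ω))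
          - ((if Y ω ≤ x₂ then (1 : ℝ) else 0) - α) * (g x₂ - g (Y ω))) ∂μ
        = ∫ ω, (((if Yhat ω ≤ x₁ then (1 : ℝ) else 0) - α) * (g x₁ - g (Yhat ω))
            - ((if Yhat ω ≤ x₂ then (1 : ℝ) else 0) - α) * (g x₂ - g (Yhat ω))) ∂μ) :
    ∀ z : ℝ, cdf (μ.map Y) z = cdf (μ.map Yhat) z := by
  intro z
  by_cases hup : ∀ y ∈ O, y ≤ z
  · -- no mass above `z`: both distribution functions equal `1`
    rw [cdf_map_eq_integral μ Y hY_meas, cdf_map_eq_integral μ Yhat hYhat_meas]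
    refine (integral_congr_ae (g := fun _ => (1 : ℝ)) ?_).trans
      (integral_congr_ae (g := fun _ => (1 : ℝ)) ?_).symm
    · filter_upwards [hY_supp] with ω hω using if_pos (hup _ hω)
    · filter_upwards [hYhat_supp] with ω hω using if_pos (hup _ hω)
  push Not at hup
  obtain ⟨b, hb, hzb⟩ := hup
  by_cases hz : z ∈ O
  · exact le_antisymm
      (cdf_le_of_expected_loss_eq μ α O hO_conv g hg Y Yhat hY_meas hYhat_meas hY_supp hYhat_supp
        hFhat_cont hgY_int hgYhat_int hrobust hz hb hzb)
      (cdf_le_of_expected_loss_eq μ α O hO_conv g hg Yhat Y hYhat_meas hY_meas hYhat_supp hY_supp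
        hF_cont hgYhat_int hgY_int (fun x₁ h₁ x₂ h₂ => (hrobust x₁ h₁ x₂ h₂).symm) hz hb hzb)
  · -- `O` is an interval that misses `z` and reaches above it, so it lies entirely above `z`
    have hlow : ∀ y ∈ O, ¬ y ≤ z := fun y hy hyz =>
      hz (hO_conv.ordConnected.out hy hb ⟨hyz, hzb.le⟩)
    rw [cdf_map_eq_integral μ Y hY_meas, cdf_map_eq_integral μ Yhat hYhat_meas]
    refine (integral_congr_ae (g := fun _ => (0 : ℝ)) ?_).trans
      (integral_congr_ae (g := fun _ => (0 : ℝ)) ?_).symm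
    · filter_upwards [hY_supp] with ω hω using if_neg (hlow _ hω)
    · filter_upwards [hYhat_supp] with ω hω using if_neg (hlow _ hω)
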